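/- There is a constant C ≥ 1 such that the following holds for every 3-graph H and every 0 < ε ≤ 1/2: if a triad P = (E0,E1,E2) on vertex classes of common size, with d(E0) = d(E1) = d(E2), is ε^C-quasirandom in H, and for every 0 ≤ i ≤ 2 the bipartite graph E_i is d(E_i)^C-regular, then P is ε-regular in H. -/

import Mathlib

open scoped Classical

noncomputable section

/-- The number of edges of a bipartite graph `G` between vertex subsets `A` and `B`. -/
def bmEdges {α β : Type*} (G : Finset (α × β)) (A : Finset α) (B : Finset β) : ℕ :=
  (G.filter fun p => p.1 ∈ A ∧ p.2 ∈ B).card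

/-- The edge density of a bipartite graph `G` between `A` and `B`. -/
def bmDens {α β : Type*} (G : Finset (α × β)) (A : Finset α) (B : Finset β) : ℝ :=
  (bmEdges G A B : ℝ) / ((A.card : ℝ) * (B.card : ℝ))

/-- `⟨δ⟩`-regularity of a bipartite graph `G` on vertex classes `(A, B)`:
for all `A' ⊆ A`, `B' ⊆ B` with `|A'| ≥ δ|A|`, `|B'| ≥ δ|B|` we have
`d_G(A',B') ≥ (1/2) d_G(A,B)`. -/
def DeltaReg {α β : Type*} (δ : ℝ) (G : Finset (α × β)) (A : Finset α) (B : Finset β) : Prop :=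
  ∀ A' ⊆ A, ∀ B' ⊆ B, δ * (A.card : ℝ) ≤ (A'.card : ℝ) → δ * (B.card : ℝ) ≤ (B'.card : ℝ) →
    bmDens G A' B' ≥ (1 / 2) * bmDens G A B

/-- Szemerédi `ε`-regularity of a bipartite graph on `(A, B)`. -/
def SzReg {α β : Type*} (ε : ℝ) (G : Finset (α × β)) (A : Finset α) (B : Finset β) : Prop :=
  ∀ A' ⊆ A, ∀ B' ⊆ B, ε * (A.card : ℝ) ≤ (A'.card : ℝ) → ε * (B.card : ℝ) ≤ (B'.card : ℝ) →
    |bmDens G A' B' - bmDens G A B| ≤ ε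

/-- `P` is a partition of the finite set `S` (into nonempty parts). -/
def IsPartition {α : Type*} (P : Finset (Finset α)) (S : Finset α) : Prop :=
  (∀ p ∈ P, p.Nonempty) ∧ (∀ p ∈ P, p ⊆ S) ∧ ∀ v ∈ S, ∃! p, p ∈ P ∧ v ∈ p

/-- `Q` refines `P`: every member of `Q` is contained in a member of `P`. -/
def Refines {α : Type*} (Q P : Finset (Finset α)) : Prop :=
  ∀ q ∈ Q, ∃ p ∈ P, q ⊆ p

/-- All parts of `P` have the same size. -/
def EquitableParts {α : Type*} (P : Finset (Finset α)) : Prop :=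
  ∀ p ∈ P, ∀ q ∈ P, p.card = q.card

/-- `S ⊆_β T`, i.e. `|S \ T| < β |S|`. -/
def ApproxSub {α : Type*} [DecidableEq α] (β' : ℝ) (S T : Finset α) : Prop :=
  ((S \ T).card : ℝ) < β' * (S.card : ℝ)

/-- `S ∈_β P`, i.e. `S ⊆_β p` for some `p ∈ P`. -/
def ApproxMem {α : Type*} [DecidableEq α] (β' : ℝ) (S : Finset α) (P : Finset (Finset α)) :
    Prop :=
  ∃ p ∈ P, ApproxSub β' S p

/-- `Q ≺_β P` for partitions `Q`, `P` of the set `S`. -/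
def ApproxRefines {α : Type*} [DecidableEq α] (β' : ℝ) (Q P : Finset (Finset α))
    (S : Finset α) : Prop :=
  ∑ q ∈ Q.filter fun q => ¬ ApproxMem β' q P, (q.card : ℝ) ≤ β' * (S.card : ℝ)

/-- The vertex partition `P ∪ Q` of a bipartite graph `G` on vertex classes `(L, R)` is
`⟨δ⟩`-regular: one can add/remove at most `δ·e(G)` edges so that the bipartite graph induced
on each pair of distinct parts is `⟨δ⟩`-regular. -/
def DeltaRegPartition {α β : Type*} [DecidableEq α] [DecidableEq β]
    (δ : ℝ) (G : Finset (α × β)) (L : Finset α) (R : Finset β)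
    (P : Finset (Finset α)) (Q : Finset (Finset β)) : Prop :=
  ∃ G' : Finset (α × β), G' ⊆ L ×ˢ R ∧
    ((G' \ G).card : ℝ) + ((G \ G').card : ℝ) ≤ δ * (G.card : ℝ) ∧
    ∀ A ∈ P, ∀ B ∈ Q, DeltaReg δ G' A B

/-- The vertex partition `P ∪ Q` of a bipartite graph `G` is perfectly `⟨δ⟩`-regular:
without modifying any edges, each pair of distinct parts induces a `⟨δ⟩`-regular graph. -/
def PerfectDeltaRegPartition {α β : Type*} (δ : ℝ) (G : Finset (α × β))
    (P : Finset (Finset α)) (Q : Finset (Finset β)) : Prop :=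
  ∀ A ∈ P, ∀ B ∈ Q, DeltaReg δ G A B

/-- A 2-partition `(Z, E)` on the vertex set `S`: `Z` partitions `S`, the members of `E` are
pairwise edge-disjoint bipartite graphs between distinct parts of `Z`, and for all distinct
`Z1, Z2 ∈ Z` the complete bipartite graph `Z1 × Z2` is the union of the members of `E`
between `Z1` and `Z2`. -/
def Is2Partition {α : Type*} [DecidableEq α]
    (Z : Finset (Finset α)) (E : Finset (Finset (α × α))) (S : Finset α) : Prop :=
  IsPartition Z S ∧
  (∀ g ∈ E, ∃ Z1 ∈ Z, ∃ Z2 ∈ Z, Z1 ≠ Z2 ∧ g ⊆ Z1 ×ˢ Z2) ∧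
  (∀ g ∈ E, ∀ g' ∈ E, g ≠ g' → Disjoint g g') ∧
  ∀ Z1 ∈ Z, ∀ Z2 ∈ Z, Z1 ≠ Z2 → ∀ p ∈ Z1 ×ˢ Z2, ∃ g ∈ E, g ⊆ Z1 ×ˢ Z2 ∧ p ∈ g

/-- The parts of `Z` contained in `A` (e.g. `Z_i`, the restriction of `Z` to `V_i`). -/
def partsIn {α : Type*} [DecidableEq α] (Z : Finset (Finset α)) (A : Finset α) :
    Finset (Finset α) :=
  Z.filter fun z => z ⊆ A

/-- The members of `E` contained in `A × B` (e.g. `E_i`). -/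
def graphsIn {α : Type*} [DecidableEq α] (E : Finset (Finset (α × α))) (A B : Finset α) :
    Finset (Finset (α × α)) :=
  E.filter fun g => g ⊆ A ×ˢ B

/-- `H` is a 3-partite 3-graph on the (disjoint) vertex classes `(V1, V2, V3)`. -/
def Is3Partite {α : Type*} (H : Finset (α × α × α)) (V1 V2 V3 : Finset α) : Prop :=
  (Disjoint V1 V2 ∧ Disjoint V1 V3 ∧ Disjoint V2 V3) ∧ H ⊆ V1 ×ˢ V2 ×ˢ V3

/-- The auxiliary bipartite graph `G_H^1` on `(V2 × V3, V1)`. -/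
def GH1 {α : Type*} [DecidableEq α] (H : Finset (α × α × α)) : Finset ((α × α) × α) :=
  H.image fun t => ((t.2.1, t.2.2), t.1)

/-- The auxiliary bipartite graph `G_H^2` on `(V1 × V3, V2)`. -/
def GH2 {α : Type*} [DecidableEq α] (H : Finset (α × α × α)) : Finset ((α × α) × α) :=
  H.image fun t => ((t.1, t.2.2), t.2.1)

/-- The auxiliary bipartite graph `G_H^3` on `(V1 × V2, V3)`. -/
def GH3 {α : Type*} [DecidableEq α] (H : Finset (α × α × α)) : Finset ((α × α) × α) :=
  H.image fun t => ((t.1, t.2.1), t.2.2)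

/-- The 2-partition `(Z, E)` is `⟨δ⟩`-good: every bipartite graph in `E` (between any two
distinct vertex clusters of `Z`) is `⟨δ⟩`-regular. -/
def DeltaGood {α : Type*} [DecidableEq α] (δ : ℝ)
    (Z : Finset (Finset α)) (E : Finset (Finset (α × α))) : Prop :=
  ∀ g ∈ E, ∀ Z1 ∈ Z, ∀ Z2 ∈ Z, Z1 ≠ Z2 → g ⊆ Z1 ×ˢ Z2 → DeltaReg δ g Z1 Z2

/-- `(Z, E)` is a `⟨δ⟩`-regular partition of the 3-partite 3-graph `H` on `(V1, V2, V3)`: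
it is a `⟨δ⟩`-good 2-partition with `Z ≺ {V1, V2, V3}` and, for each `1 ≤ i ≤ 3`,
`E_i ∪ Z_i` is a `⟨δ⟩`-regular vertex partition of `G_H^i`. -/
def Delta3RegPartition {α : Type*} [DecidableEq α] (δ : ℝ) (H : Finset (α × α × α))
    (V1 V2 V3 : Finset α) (Z : Finset (Finset α)) (E : Finset (Finset (α × α))) : Prop :=
  Is2Partition Z E (V1 ∪ V2 ∪ V3) ∧ Refines Z {V1, V2, V3} ∧ DeltaGood δ Z E ∧
  DeltaRegPartition δ (GH1 H) (V2 ×ˢ V3) V1 (graphsIn E V2 V3) (partsIn Z V1) ∧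
  DeltaRegPartition δ (GH2 H) (V1 ×ˢ V3) V2 (graphsIn E V1 V3) (partsIn Z V2) ∧
  DeltaRegPartition δ (GH3 H) (V1 ×ˢ V2) V3 (graphsIn E V1 V2) (partsIn Z V3)

/-- The tower function: `twr 0 = 1` and `twr (x+1) = 2 ^ twr x`. -/
def twr : ℕ → ℕ
  | 0 => 1
  | n + 1 => 2 ^ twr n

/-- The wowzer function: `twr` iterated `x` times, applied to `1`. -/
def wow (x : ℕ) : ℕ := twr^[x] 1

/-- The set of triangles of the triad given by bipartite graphs `e1`, `e2`, `e3`: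
triples `(a, b, c)` with `(a,b) ∈ e1`, `(a,c) ∈ e2` and `(b,c) ∈ e3`. -/
def tri {α β γ : Type*} [DecidableEq α] [DecidableEq β] [DecidableEq γ]
    (e1 : Finset (α × β)) (e2 : Finset (α × γ)) (e3 : Finset (β × γ)) :
    Finset (α × β × γ) :=
  ((e1 ×ˢ e3).filter fun q => q.1.2 = q.2.1 ∧ (q.1.1, q.2.2) ∈ e2).image
    fun q => (q.1.1, q.1.2, q.2.2)

/-- The density `d_H(P)` of a triad `P = (e1, e2, e3)` in the 3-graph `H`. -/
def triDens {α : Type*} [DecidableEq α] (H : Finset (α × α × α))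
    (e1 e2 e3 : Finset (α × α)) : ℝ :=
  ((H ∩ tri e1 e2 e3).card : ℝ) / ((tri e1 e2 e3).card : ℝ)

/-- The triad `(e1, e2, e3)` is `ε`-regular in the 3-graph `H`: every subtriad `(f1, f2, f3)`
with `t(P') ≥ ε t(P)` satisfies `|d_H(P') - d_H(P)| ≤ ε`. -/
def TriadReg {α : Type*} [DecidableEq α] (ε : ℝ) (H : Finset (α × α × α))
    (e1 e2 e3 : Finset (α × α)) : Prop :=
  ∀ f1 ⊆ e1, ∀ f2 ⊆ e2, ∀ f3 ⊆ e3,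
    ε * ((tri e1 e2 e3).card : ℝ) ≤ ((tri f1 f2 f3).card : ℝ) →
    |triDens H f1 f2 f3 - triDens H e1 e2 e3| ≤ ε

/-- The triads of the 2-partition `(Z, E)`: triples of members of `E` forming a tripartite
graph on three distinct parts of `Z`. -/
def triads {α : Type*} [DecidableEq α] (Z : Finset (Finset α))
    (E : Finset (Finset (α × α))) :
    Finset (Finset (α × α) × Finset (α × α) × Finset (α × α)) :=
  (E ×ˢ E ×ˢ E).filter fun e => ∃ Z1 ∈ Z, ∃ Z2 ∈ Z, ∃ Z3 ∈ Z,
    Z1 ≠ Z2 ∧ Z1 ≠ Z3 ∧ Z2 ≠ Z3 ∧ e.1 ⊆ Z1 ×ˢ Z2 ∧ e.2.1 ⊆ Z1 ×ˢ Z3 ∧ e.2.2 ⊆ Z2 ×ˢ Z3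

/-- An `(ℓ, t, ε₂)`-equipartition on `S`: a 2-partition `(Z, E)` where `Z` is an equitable
partition of order `t` and every graph in `E` is `ε₂`-regular of density `ℓ⁻¹ ± ε₂`. -/
def IsEquipartition23 {α : Type*} [DecidableEq α] (ℓ t : ℕ) (ε₂ : ℝ)
    (Z : Finset (Finset α)) (E : Finset (Finset (α × α))) (S : Finset α) : Prop :=
  Is2Partition Z E S ∧ EquitableParts Z ∧ Z.card = t ∧
  ∀ g ∈ E, ∀ Z1 ∈ Z, ∀ Z2 ∈ Z, Z1 ≠ Z2 → g ⊆ Z1 ×ˢ Z2 →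
    SzReg ε₂ g Z1 Z2 ∧ |bmDens g Z1 Z2 - 1 / (ℓ : ℝ)| ≤ ε₂

/-- The `(ℓ,t,ε₂)`-equipartition `(Z, E)` is an `ε`-regular partition of the 3-graph `H`
with vertex set `S` (Frankl–Rödl): `Σ t(P) ≤ ε |S|³`, summed over non-`ε`-regular triads. -/
def FRRegPartition {α : Type*} [DecidableEq α] (ε : ℝ) (H : Finset (α × α × α))
    (S : Finset α) (Z : Finset (Finset α)) (E : Finset (Finset (α × α))) : Prop :=
  ∑ e ∈ (triads Z E).filter fun e => ¬ TriadReg ε H e.1 e.2.1 e.2.2,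
    ((tri e.1 e.2.1 e.2.2).card : ℝ) ≤ ε * (S.card : ℝ) ^ 3

/-- The function `f` from the definition of quasirandomness of a triad. -/
def fQ {α : Type*} [DecidableEq α] (H : Finset (α × α × α)) (e1 e2 e3 : Finset (α × α))
    (x y z : α) : ℝ :=
  if (x, y, z) ∈ tri e1 e2 e3 then
    (if (x, y, z) ∈ H then 1 - triDens H e1 e2 e3 else -triDens H e1 e2 e3)
  else 0

/-- The octahedron sum from the definition of quasirandomness. -/
def octSum {α : Type*} [DecidableEq α] (H : Finset (α × α × α)) (e1 e2 e3 : Finset (α × α))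
    (X Y Z : Finset α) : ℝ :=
  ∑ x0 ∈ X, ∑ x1 ∈ X, ∑ y0 ∈ Y, ∑ y1 ∈ Y, ∑ z0 ∈ Z, ∑ z1 ∈ Z,
    fQ H e1 e2 e3 x0 y0 z0 * fQ H e1 e2 e3 x0 y0 z1 * fQ H e1 e2 e3 x0 y1 z0 *
      fQ H e1 e2 e3 x0 y1 z1 * fQ H e1 e2 e3 x1 y0 z0 * fQ H e1 e2 e3 x1 y0 z1 *
      fQ H e1 e2 e3 x1 y1 z0 * fQ H e1 e2 e3 x1 y1 z1

/-- The triad `(e1, e2, e3)` on vertex classes `(X, Y, Z)` with `d(e1) = d(e2) = d(e3) = d`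
and `|X| = |Y| = |Z| = n` is `a`-quasirandom in `H`: the octahedron sum is at most
`a d¹² n⁶`. -/
def Quasirandom {α : Type*} [DecidableEq α] (a : ℝ) (H : Finset (α × α × α))
    (e1 e2 e3 : Finset (α × α)) (X Y Z : Finset α) : Prop :=
  ∀ (d : ℝ) (n : ℕ), bmDens e1 X Y = d → bmDens e2 X Z = d → bmDens e3 Y Z = d →
    X.card = n → Y.card = n → Z.card = n →
    octSum H e1 e2 e3 X Y Z ≤ a * d ^ 12 * (n : ℝ) ^ 6

/-- The `(ℓ,t,ε₂)`-equipartition `(Z, E)` is an `a`-quasirandom partition of the 3-graph `H`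
with vertex set `S`: `Σ t(P) ≤ a |S|³`, summed over non-`a`-quasirandom triads. -/
def QuasirandomPartition {α : Type*} [DecidableEq α] (a : ℝ) (H : Finset (α × α × α))
    (S : Finset α) (Z : Finset (Finset α)) (E : Finset (Finset (α × α))) : Prop :=
  ∑ e ∈ (E ×ˢ E ×ˢ E).filter fun e => ∃ Z1 ∈ Z, ∃ Z2 ∈ Z, ∃ Z3 ∈ Z,
      Z1 ≠ Z2 ∧ Z1 ≠ Z3 ∧ Z2 ≠ Z3 ∧
      e.1 ⊆ Z1 ×ˢ Z2 ∧ e.2.1 ⊆ Z1 ×ˢ Z3 ∧ e.2.2 ⊆ Z2 ×ˢ Z3 ∧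
      ¬ Quasirandom a H e.1 e.2.1 e.2.2 Z1 Z2 Z3,
    ((tri e.1 e.2.1 e.2.2).card : ℝ) ≤ a * (S.card : ℝ) ^ 3

/-- `e(i) = 2^(i+10)`. -/
def efn (i : ℕ) : ℕ := 2 ^ (i + 10)

/-- `t(1) = 2^250` and `t(i+1) = 2^(t(i)/e(i))` for `i ≥ 1`. -/
def tfn : ℕ → ℕ
  | 0 => 0
  | 1 => 2 ^ 250
  | n + 2 => 2 ^ (tfn (n + 1) / efn (n + 1))

/-- `w(1) = 1` and `w(i+1) = w*(i) = t(w(i))/e(i)` for `i ≥ 1`. -/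
def wfn : ℕ → ℕ
  | 0 => 0
  | 1 => 1
  | n + 2 => tfn (wfn (n + 1)) / efn (n + 1)

/-- `w*(s) = t(w(s))/e(s)`. -/
def wstar (s : ℕ) : ℕ := tfn (wfn s) / efn s

end

/-!
Let `S = (d_H(P') - d_H(P)) t(P')` be the deviation of a subtriad `P' ⊆ P`. It is the sum of the
function `f` of the definition of quasirandomness against the indicator functions of the three
graphs of `P'`. Three applications of Cauchy–Schwarz, each removing one of these graphs and doubling
one vertex variable of `f`, bound `S ^ 8` by the octahedron sum of `f` times the number of edges of
`E₀` to the fourth power, the number of cherries of `E₁` squared and the number of four-cycles of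
`E₂`. Regularity of `E₁` and `E₂` shows that the last two are at most twice, and `t(P)` at least
half, the value expected in a random graph. Hence
`S ^ 8 ≤ 8 ε ^ C (d³n³) ^ 8 ≤ 2 ^ 11 ε ^ C t(P) ^ 8`, which is at most `(ε² t(P)) ^ 8` for
`C = 16 + 11` because `ε ≤ 1 / 2`. If `t(P') ≥ ε t(P)`, then dividing `|S| ≤ ε² t(P)` by `t(P')`
gives `|d_H(P') - d_H(P)| ≤ ε`.
-/

section CauchySchwarz

variable {ι κ α β γ : Type*}

theorem sq_sum_mul_sum_le (s : Finset ι) (t : Finset κ) (F : ι → ℝ) (G : ι → κ → ℝ) :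
    (∑ i ∈ s, F i * ∑ j ∈ t, G i j) ^ 2 ≤
      (∑ i ∈ s, F i ^ 2) * ∑ j ∈ t ×ˢ t, ∑ i ∈ s, G i j.1 * G i j.2 := by
  refine (Finset.sum_mul_sq_le_sq_mul_sq s F fun i => ∑ j ∈ t, G i j).trans_eq ?_
  rw [Finset.sum_comm (s := t ×ˢ t)]
  simp only [sq, Finset.sum_mul_sum, Finset.sum_product]

theorem pow_eight_le_of_sq_le {a b c o A B C : ℝ} (hab : a ^ 2 ≤ A * b) (hbc : b ^ 2 ≤ B * c)
    (hco : c ^ 2 ≤ C * o) : a ^ 8 ≤ A ^ 4 * B ^ 2 * C * o :=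
  calc a ^ 8 = (a ^ 2) ^ 4 := by ring
    _ ≤ (A * b) ^ 4 := by gcongr
    _ = A ^ 4 * (b ^ 2) ^ 2 := by ring
    _ ≤ A ^ 4 * (B * c) ^ 2 := by gcongr
    _ = A ^ 4 * B ^ 2 * c ^ 2 := by ring
    _ ≤ A ^ 4 * B ^ 2 * (C * o) := by gcongr
    _ = A ^ 4 * B ^ 2 * C * o := by ring

/-- The sum of `∏ f (x i) (y j) (z k)` over all octahedra `(x, y, z)`, i.e. the eighth power of
the (unnormalised) Gowers box norm of `f`. The order of the sums and factors is that of `octSum`. -/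
def octahedronSum (f : α → β → γ → ℝ) (X : Finset α) (Y : Finset β) (Z : Finset γ) : ℝ :=
  ∑ x0 ∈ X, ∑ x1 ∈ X, ∑ y0 ∈ Y, ∑ y1 ∈ Y, ∑ z0 ∈ Z, ∑ z1 ∈ Z,
    f x0 y0 z0 * f x0 y0 z1 * f x0 y1 z0 * f x0 y1 z1 *
      f x1 y0 z0 * f x1 y0 z1 * f x1 y1 z0 * f x1 y1 z1

variable (f : α → β → γ → ℝ) (X : Finset α) (Y : Finset β) (Z : Finset γ)

theorem octahedronSum_eq_sum_product :
    octahedronSum f X Y Z = ∑ x ∈ X ×ˢ X, ∑ w ∈ (Y ×ˢ Y) ×ˢ Z ×ˢ Z,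
      (f x.1 w.1.1 w.2.1 * f x.1 w.1.1 w.2.2 * (f x.1 w.1.2 w.2.1 * f x.1 w.1.2 w.2.2)) *
        (f x.2 w.1.1 w.2.1 * f x.2 w.1.1 w.2.2 * (f x.2 w.1.2 w.2.1 * f x.2 w.1.2 w.2.2)) := by
  simp only [octahedronSum, Finset.sum_product, mul_assoc]

theorem octahedronSum_nonneg : 0 ≤ octahedronSum f X Y Z := by
  rw [octahedronSum_eq_sum_product, Finset.sum_comm]
  simp only [Finset.sum_product (s := X), ← Finset.sum_mul_sum]
  exact Finset.sum_nonneg fun _ _ => mul_self_nonneg _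

variable (F₀ : α → β → ℝ) (F₁ : α → γ → ℝ) (F₂ : β → γ → ℝ)

theorem sq_sum_le_sum_double_z :
    (∑ x ∈ X, ∑ y ∈ Y, ∑ z ∈ Z, f x y z * (F₀ x y * F₁ x z * F₂ y z)) ^ 2 ≤
      (∑ x ∈ X, ∑ y ∈ Y, F₀ x y ^ 2) *
        ∑ x ∈ X, ∑ z ∈ Z ×ˢ Z, F₁ x z.1 * F₁ x z.2 *
          ∑ y ∈ Y, f x y z.1 * f x y z.2 * (F₂ y z.1 * F₂ y z.2) := by
  convert sq_sum_mul_sum_le (X ×ˢ Y) Z (fun p => F₀ p.1 p.2)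
    fun p z => f p.1 p.2 z * (F₁ p.1 z * F₂ p.2 z) using 2
  · simp only [Finset.sum_product, Finset.mul_sum]
    refine Finset.sum_congr rfl fun x _ => Finset.sum_congr rfl fun y _ =>
      Finset.sum_congr rfl fun z _ => by ring
  · rw [Finset.sum_product]
  · simp only [Finset.mul_sum, Finset.sum_product (s := X)]
    rw [Finset.sum_comm]
    refine Finset.sum_congr rfl fun z _ => Finset.sum_congr rfl fun x _ =>
      Finset.sum_congr rfl fun y _ => by ring

theorem sq_sum_double_z_le_sum_double_yz :
    (∑ x ∈ X, ∑ z ∈ Z ×ˢ Z, F₁ x z.1 * F₁ x z.2 *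
        ∑ y ∈ Y, f x y z.1 * f x y z.2 * (F₂ y z.1 * F₂ y z.2)) ^ 2 ≤
      (∑ x ∈ X, ∑ z ∈ Z ×ˢ Z, (F₁ x z.1 * F₁ x z.2) ^ 2) *
        ∑ y ∈ Y ×ˢ Y, ∑ z ∈ Z ×ˢ Z, F₂ y.1 z.1 * F₂ y.1 z.2 * (F₂ y.2 z.1 * F₂ y.2 z.2) *
          ∑ x ∈ X, f x y.1 z.1 * f x y.1 z.2 * (f x y.2 z.1 * f x y.2 z.2) := by
  convert sq_sum_mul_sum_le (X ×ˢ Z ×ˢ Z) Y (fun p => F₁ p.1 p.2.1 * F₁ p.1 p.2.2)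
    fun p y => f p.1 y p.2.1 * f p.1 y p.2.2 * (F₂ y p.2.1 * F₂ y p.2.2) using 2
  · rw [Finset.sum_product]
  · rw [Finset.sum_product]
  · simp only [Finset.mul_sum, Finset.sum_product_right (s := X)]
    refine Finset.sum_congr rfl fun y _ => Finset.sum_congr rfl fun z _ =>
      Finset.sum_congr rfl fun x _ => by ring

theorem sq_sum_double_yz_le_octahedronSum :
    (∑ y ∈ Y ×ˢ Y, ∑ z ∈ Z ×ˢ Z, F₂ y.1 z.1 * F₂ y.1 z.2 * (F₂ y.2 z.1 * F₂ y.2 z.2) *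
        ∑ x ∈ X, f x y.1 z.1 * f x y.1 z.2 * (f x y.2 z.1 * f x y.2 z.2)) ^ 2 ≤
      (∑ y ∈ Y ×ˢ Y, ∑ z ∈ Z ×ˢ Z,
        (F₂ y.1 z.1 * F₂ y.1 z.2 * (F₂ y.2 z.1 * F₂ y.2 z.2)) ^ 2) *
        octahedronSum f X Y Z := by
  rw [octahedronSum_eq_sum_product, ← Finset.sum_product', ← Finset.sum_product']
  exact sq_sum_mul_sum_le ((Y ×ˢ Y) ×ˢ Z ×ˢ Z) X
    (fun p => F₂ p.1.1 p.2.1 * F₂ p.1.1 p.2.2 * (F₂ p.1.2 p.2.1 * F₂ p.1.2 p.2.2))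
    fun p x => f x p.1.1 p.2.1 * f x p.1.1 p.2.2 * (f x p.1.2 p.2.1 * f x p.1.2 p.2.2)

theorem sum_mul_pow_eight_le_octahedronSum :
    (∑ x ∈ X, ∑ y ∈ Y, ∑ z ∈ Z, f x y z * (F₀ x y * F₁ x z * F₂ y z)) ^ 8 ≤
      (∑ x ∈ X, ∑ y ∈ Y, F₀ x y ^ 2) ^ 4 *
        (∑ x ∈ X, ∑ z ∈ Z ×ˢ Z, (F₁ x z.1 * F₁ x z.2) ^ 2) ^ 2 *
        (∑ y ∈ Y ×ˢ Y, ∑ z ∈ Z ×ˢ Z,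
          (F₂ y.1 z.1 * F₂ y.1 z.2 * (F₂ y.2 z.1 * F₂ y.2 z.2)) ^ 2) *
        octahedronSum f X Y Z :=
  pow_eight_le_of_sq_le (sq_sum_le_sum_double_z f X Y Z F₀ F₁ F₂)
    (sq_sum_double_z_le_sum_double_yz f X Y Z F₁ F₂) (sq_sum_double_yz_le_octahedronSum f X Y Z F₂)

end CauchySchwarz

section CutRegularity

variable {α β : Type*} {E F : Finset (α × β)} {X : Finset α} {Y : Finset β}

/-- The indicator function of a bipartite graph, real-valued so that subgraph counts become sums
of products. -/
noncomputable def edgeInd (E : Finset (α × β)) (a : α) (b : β) : ℝ :=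
  if (a, b) ∈ E then 1 else 0

theorem edgeInd_eq_zero_or_one (E : Finset (α × β)) (a : α) (b : β) :
    edgeInd E a b = 0 ∨ edgeInd E a b = 1 := by
  unfold edgeInd
  split_ifs <;> simp

theorem edgeInd_nonneg (E : Finset (α × β)) (a : α) (b : β) : 0 ≤ edgeInd E a b := by
  rcases edgeInd_eq_zero_or_one E a b with h | h <;> simp [h]

theorem sq_edgeInd (E : Finset (α × β)) (a : α) (b : β) : edgeInd E a b ^ 2 = edgeInd E a b := by
  rcases edgeInd_eq_zero_or_one E a b with h | h <;> simp [h]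

theorem edgeInd_mono (hFE : F ⊆ E) (a : α) (b : β) : edgeInd F a b ≤ edgeInd E a b := by
  by_cases hF : (a, b) ∈ F
  · simp [edgeInd, hF, hFE hF]
  · simpa [edgeInd, hF] using edgeInd_nonneg E a b

theorem sum_edgeInd (E : Finset (α × β)) (A : Finset α) (B : Finset β) :
    ∑ a ∈ A, ∑ b ∈ B, edgeInd E a b = bmEdges E A B := by
  have hfilter : E.filter (fun p => p.1 ∈ A ∧ p.2 ∈ B) = (A ×ˢ B).filter (· ∈ E) := by
    ext p
    simp only [Finset.mem_filter, Finset.mem_product, and_comm]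
  rw [bmEdges, hfilter, Finset.card_filter, ← Finset.sum_product']
  push_cast
  rfl

theorem bmEdges_le_card_mul_card (E : Finset (α × β)) (A : Finset α) (B : Finset β) :
    (bmEdges E A B : ℝ) ≤ A.card * B.card := by
  rw [← Nat.cast_mul, ← Finset.card_product, Nat.cast_le]
  exact Finset.card_le_card fun p hp => Finset.mem_product.2 (Finset.mem_filter.1 hp).2

theorem bmDens_mul_card (E : Finset (α × β)) (A : Finset α) (B : Finset β) :
    bmDens E A B * (A.card * B.card) = bmEdges E A B :=
  div_mul_cancel_of_imp fun h =>
    le_antisymm (h ▸ bmEdges_le_card_mul_card E A B) (Nat.cast_nonneg _)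

theorem bmDens_nonneg (E : Finset (α × β)) (A : Finset α) (B : Finset β) : 0 ≤ bmDens E A B := by
  unfold bmDens
  positivity

theorem bmDens_le_one (E : Finset (α × β)) (A : Finset α) (B : Finset β) : bmDens E A B ≤ 1 :=
  div_le_one_of_le₀ (bmEdges_le_card_mul_card E A B) (by positivity)

/-- `E` has cut discrepancy at most `η` on `(X, Y)`: it is within `η` of its density in the
normalised cut norm. Unlike in `SzReg`, the error is measured relative to the whole pair, so that
no lower bound on the sizes of the subsets is needed. -/
def CutRegular (η : ℝ) (E : Finset (α × β)) (X : Finset α) (Y : Finset β) : Prop :=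
  ∀ A ⊆ X, ∀ B ⊆ Y,
    |(bmEdges E A B : ℝ) - bmDens E X Y * (A.card * B.card)| ≤ η * (X.card * Y.card)

theorem CutRegular.mono {η η' : ℝ} (h : CutRegular η E X Y) (hη : η ≤ η') :
    CutRegular η' E X Y := fun A hA B hB =>
  (h A hA B hB).trans (by gcongr)

theorem CutRegular.mul_card_nonneg {η : ℝ} (h : CutRegular η E X Y) :
    0 ≤ η * (X.card * Y.card) :=
  (abs_nonneg _).trans (h ∅ (Finset.empty_subset X) ∅ (Finset.empty_subset Y))

theorem SzReg.cutRegular {δ : ℝ} (h : SzReg δ E X Y) (hδ : 0 ≤ δ) : CutRegular δ E X Y := by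
  intro A hA B hB
  have hAX : (A.card : ℝ) ≤ X.card := by exact_mod_cast Finset.card_le_card hA
  have hBY : (B.card : ℝ) ≤ Y.card := by exact_mod_cast Finset.card_le_card hB
  by_cases hlarge : δ * X.card ≤ A.card ∧ δ * Y.card ≤ B.card
  · calc |(bmEdges E A B : ℝ) - bmDens E X Y * (A.card * B.card)|
        = |bmDens E A B - bmDens E X Y| * (A.card * B.card) := by
          rw [← bmDens_mul_card, ← sub_mul, abs_mul, abs_of_nonneg (a := (A.card * B.card : ℝ))]
          positivity
      _ ≤ δ * (X.card * Y.card) := by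
          gcongr
          exact h A hA B hB hlarge.1 hlarge.2
  · have hsmall : (A.card : ℝ) * B.card ≤ δ * (X.card * Y.card) := by
      rcases not_and_or.1 hlarge with hA' | hB'
      · calc (A.card : ℝ) * B.card ≤ δ * X.card * Y.card := by gcongr; exact (not_le.1 hA').le
          _ = δ * (X.card * Y.card) := mul_assoc _ _ _
      · calc (A.card : ℝ) * B.card ≤ X.card * (δ * Y.card) := by gcongr; exact (not_le.1 hB').le
          _ = δ * (X.card * Y.card) := mul_left_comm _ _ _
    refine (abs_sub_le_of_nonneg_of_le (Nat.cast_nonneg _) (bmEdges_le_card_mul_card E A B)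
      (mul_nonneg (bmDens_nonneg E X Y) (by positivity)) ?_).trans hsmall
    exact mul_le_of_le_one_left (by positivity) (bmDens_le_one E X Y)

theorem card_mul_card_sub_bmEdges_mono (E : Finset (α × β)) {A : Finset α} {B : Finset β}
    (hA : A ⊆ X) (hB : B ⊆ Y) :
    (A.card * B.card : ℝ) - bmEdges E A B ≤ X.card * Y.card - bmEdges E X Y := by
  have hcount : ∀ (A : Finset α) (B : Finset β),
      (A.card * B.card : ℝ) - bmEdges E A B = ∑ p ∈ A ×ˢ B, (1 - edgeInd E p.1 p.2) := by
    intro A B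
    rw [Finset.sum_sub_distrib, Finset.sum_product (f := fun p => edgeInd E p.1 p.2), sum_edgeInd]
    simp
  rw [hcount, hcount]
  refine Finset.sum_le_sum_of_subset_of_nonneg (Finset.product_subset_product hA hB) fun p _ _ => ?_
  rcases edgeInd_eq_zero_or_one E p.1 p.2 with h | h <;> simp [h]

theorem cutRegular_one_sub_bmDens (E : Finset (α × β)) (X : Finset α) (Y : Finset β) :
    CutRegular (1 - bmDens E X Y) E X Y := by
  intro A hA B hB
  have hAX : (A.card : ℝ) ≤ X.card := by exact_mod_cast Finset.card_le_card hA
  have hBY : (B.card : ℝ) ≤ Y.card := by exact_mod_cast Finset.card_le_card hB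
  have hd : 0 ≤ 1 - bmDens E X Y := sub_nonneg.2 (bmDens_le_one E X Y)
  have hedges := bmEdges_le_card_mul_card E A B
  have hnonedges := card_mul_card_sub_bmEdges_mono E hA hB
  rw [← bmDens_mul_card E X Y] at hnonedges
  have hlower : (1 - bmDens E X Y) * (A.card * B.card) ≤
      (1 - bmDens E X Y) * (X.card * Y.card) := by gcongr
  have hpos : 0 ≤ (1 - bmDens E X Y) * (A.card * B.card) := by positivity
  rw [abs_le]
  constructor <;> linarith

/-- At density close to `1` the assumed regularity is void, but there a graph is automatically
close to complete. -/
theorem SzReg.cutRegular_bmDens_pow_four (h : SzReg (bmDens E X Y ^ 27) E X Y) :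
    CutRegular (bmDens E X Y ^ 4 / 4) E X Y := by
  have hd := bmDens_nonneg E X Y
  rcases le_total (bmDens E X Y) (9 / 10) with hsparse | hdense
  · refine (h.cutRegular (by positivity)).mono ?_
    calc bmDens E X Y ^ 27 = bmDens E X Y ^ 4 * bmDens E X Y ^ 23 := by ring
      _ ≤ bmDens E X Y ^ 4 * (9 / 10) ^ 23 := by gcongr
      _ ≤ bmDens E X Y ^ 4 / 4 := by linarith [pow_nonneg hd 4]
  · refine (cutRegular_one_sub_bmDens E X Y).mono ?_
    have hpow : (9 / 10 : ℝ) ^ 4 ≤ bmDens E X Y ^ 4 := by gcongr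
    linarith

theorem sum_mul_eq_sum_filter_eq_one {ι : Type*} {u : ι → ℝ} (hu : ∀ i, u i = 0 ∨ u i = 1)
    (s : Finset ι) (φ : ι → ℝ) : ∑ i ∈ s, φ i * u i = ∑ i ∈ s.filter (u · = 1), φ i := by
  rw [Finset.sum_filter]
  refine Finset.sum_congr rfl fun i _ => ?_
  rcases hu i with h | h <;> simp [h]

theorem CutRegular.abs_sum_mul_sub_le {η : ℝ} (h : CutRegular η E X Y) {u : α → ℝ} {v : β → ℝ}
    (hu : ∀ a, u a = 0 ∨ u a = 1) (hv : ∀ b, v b = 0 ∨ v b = 1) :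
    |∑ a ∈ X, ∑ b ∈ Y, edgeInd E a b * (u a * v b) -
        bmDens E X Y * ((∑ a ∈ X, u a) * ∑ b ∈ Y, v b)| ≤ η * (X.card * Y.card) := by
  set A := X.filter (u · = 1)
  set B := Y.filter (v · = 1)
  have hA : ∑ a ∈ X, u a = A.card := by simpa using sum_mul_eq_sum_filter_eq_one hu X 1
  have hB : ∑ b ∈ Y, v b = B.card := by simpa using sum_mul_eq_sum_filter_eq_one hv Y 1
  have hAB : ∑ a ∈ X, ∑ b ∈ Y, edgeInd E a b * (u a * v b) = bmEdges E A B := by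
    simp only [← sum_edgeInd, A, B, ← sum_mul_eq_sum_filter_eq_one hu,
      ← sum_mul_eq_sum_filter_eq_one hv, Finset.sum_mul, mul_assoc, mul_comm (u _)]
  rw [hA, hB, hAB]
  exact h A (Finset.filter_subset _ _) B (Finset.filter_subset _ _)

end CutRegularity

section Counting

variable {α β γ : Type*} {X : Finset α} {Y : Finset β} {Z : Finset γ}

/-- The number of pairs of edges of `E` (possibly equal) sharing their endpoint in `X`. -/
noncomputable def cherryCount (E : Finset (α × β)) (X : Finset α) (Y : Finset β) : ℝ :=
  ∑ x ∈ X, ∑ y ∈ Y ×ˢ Y, edgeInd E x y.1 * edgeInd E x y.2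

/-- The number of homomorphic copies of the four-cycle in `E`, degenerate ones included. -/
noncomputable def fourCycleCount (E : Finset (α × β)) (X : Finset α) (Y : Finset β) : ℝ :=
  ∑ x ∈ X ×ˢ X, ∑ y ∈ Y ×ˢ Y,
    edgeInd E x.1 y.1 * edgeInd E x.1 y.2 * (edgeInd E x.2 y.1 * edgeInd E x.2 y.2)

theorem cherryCount_nonneg (E : Finset (α × β)) (X : Finset α) (Y : Finset β) :
    0 ≤ cherryCount E X Y :=
  Finset.sum_nonneg fun _ _ => Finset.sum_nonneg fun _ _ =>
    mul_nonneg (edgeInd_nonneg E _ _) (edgeInd_nonneg E _ _)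

theorem fourCycleCount_nonneg (E : Finset (α × β)) (X : Finset α) (Y : Finset β) :
    0 ≤ fourCycleCount E X Y :=
  Finset.sum_nonneg fun _ _ => Finset.sum_nonneg fun _ _ => by
    apply_rules [mul_nonneg, edgeInd_nonneg]

theorem cherryCount_mono {F E : Finset (α × β)} (hFE : F ⊆ E) (X : Finset α) (Y : Finset β) :
    cherryCount F X Y ≤ cherryCount E X Y := by
  unfold cherryCount
  gcongr <;> apply_rules [edgeInd_mono, edgeInd_nonneg]

theorem fourCycleCount_mono {F E : Finset (α × β)} (hFE : F ⊆ E) (X : Finset α) (Y : Finset β) :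
    fourCycleCount F X Y ≤ fourCycleCount E X Y := by
  unfold fourCycleCount
  gcongr <;> apply_rules [edgeInd_mono, mul_nonneg, edgeInd_nonneg]

theorem CutRegular.cherryCount_le {E : Finset (α × β)} {η : ℝ} (h : CutRegular η E X Y) :
    cherryCount E X Y ≤ (bmDens E X Y ^ 2 + η) * (X.card * Y.card ^ 2) := by
  have hfiber : ∀ y₀ ∈ Y, ∑ x ∈ X, ∑ y ∈ Y, edgeInd E x y * edgeInd E x y₀ ≤
      bmDens E X Y * ((∑ x ∈ X, edgeInd E x y₀) * Y.card) + η * (X.card * Y.card) := by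
    intro y₀ _
    have := h.abs_sum_mul_sub_le (u := (edgeInd E · y₀)) (v := fun _ => 1)
      (edgeInd_eq_zero_or_one E · y₀) fun _ => Or.inr rfl
    simp only [mul_one, Finset.sum_const, nsmul_eq_mul] at this
    linarith [(abs_le.1 this).2]
  calc cherryCount E X Y
      = ∑ y₀ ∈ Y, ∑ x ∈ X, ∑ y ∈ Y, edgeInd E x y * edgeInd E x y₀ := by
        rw [Finset.sum_comm]
        simp only [cherryCount, Finset.sum_product_right]
    _ ≤ ∑ y₀ ∈ Y, (bmDens E X Y * ((∑ x ∈ X, edgeInd E x y₀) * Y.card) +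
          η * (X.card * Y.card)) := Finset.sum_le_sum hfiber
    _ = bmDens E X Y * (bmEdges E X Y * Y.card) + Y.card * (η * (X.card * Y.card)) := by
        rw [Finset.sum_add_distrib, ← Finset.mul_sum, ← Finset.sum_mul, Finset.sum_comm,
          sum_edgeInd, Finset.sum_const, nsmul_eq_mul]
    _ = (bmDens E X Y ^ 2 + η) * (X.card * Y.card ^ 2) := by
        rw [← bmDens_mul_card]
        ring

theorem CutRegular.sum_degree_mul_degree_le {E : Finset (α × β)} {η : ℝ}
    (h : CutRegular η E X Y) :
    ∑ x ∈ X, ∑ y ∈ Y, edgeInd E x y * ((∑ x' ∈ X, edgeInd E x' y) * ∑ y' ∈ Y, edgeInd E x y') ≤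
      (bmDens E X Y ^ 3 + η) * (X.card * Y.card) ^ 2 := by
  have hfiber : ∀ x₀ ∈ X, ∀ y₀ ∈ Y,
      ∑ x ∈ X, ∑ y ∈ Y, edgeInd E x y * (edgeInd E x y₀ * edgeInd E x₀ y) ≤
      bmDens E X Y * ((∑ x ∈ X, edgeInd E x y₀) * ∑ y ∈ Y, edgeInd E x₀ y) +
        η * (X.card * Y.card) := fun x₀ _ y₀ _ => by
    linarith [(abs_le.1 (h.abs_sum_mul_sub_le (edgeInd_eq_zero_or_one E · y₀)
      (edgeInd_eq_zero_or_one E x₀))).2]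
  calc _ = ∑ x₀ ∈ X, ∑ y₀ ∈ Y,
        ∑ x ∈ X, ∑ y ∈ Y, edgeInd E x y * (edgeInd E x y₀ * edgeInd E x₀ y) := by
        simp only [Finset.sum_mul_sum]
        simp only [Finset.mul_sum]
        rw [Finset.sum_congr rfl fun _ _ => Finset.sum_comm, Finset.sum_comm]
        refine Finset.sum_congr rfl fun x₀ _ => ?_
        rw [Finset.sum_congr rfl fun _ _ => Finset.sum_comm, Finset.sum_comm]
        refine Finset.sum_congr rfl fun y₀ _ => Finset.sum_congr rfl fun x _ =>
          Finset.sum_congr rfl fun y _ => by ring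
    _ ≤ ∑ x₀ ∈ X, ∑ y₀ ∈ Y,
        (bmDens E X Y * ((∑ x ∈ X, edgeInd E x y₀) * ∑ y ∈ Y, edgeInd E x₀ y) +
          η * (X.card * Y.card)) :=
        Finset.sum_le_sum fun x₀ hx₀ => Finset.sum_le_sum (hfiber x₀ hx₀)
    _ = bmDens E X Y * (bmEdges E X Y * bmEdges E X Y) +
        η * (X.card * (Y.card * (X.card * Y.card))) := by
        simp only [Finset.sum_add_distrib, ← Finset.mul_sum, ← Finset.sum_mul, Finset.sum_const,
          nsmul_eq_mul, sum_edgeInd]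
        rw [Finset.sum_comm, sum_edgeInd]
    _ = (bmDens E X Y ^ 3 + η) * (X.card * Y.card) ^ 2 := by
        rw [← bmDens_mul_card]
        ring

theorem fourCycleCount_eq_sum (E : Finset (α × β)) (X : Finset α) (Y : Finset β) :
    fourCycleCount E X Y = ∑ x₀ ∈ X, ∑ y₀ ∈ Y, edgeInd E x₀ y₀ *
      ∑ x ∈ X, ∑ y ∈ Y, edgeInd E x y * (edgeInd E x y₀ * edgeInd E x₀ y) := by
  simp only [fourCycleCount, Finset.sum_product, Finset.mul_sum]
  refine Finset.sum_congr rfl fun x₀ _ => ?_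
  rw [Finset.sum_comm]
  refine Finset.sum_congr rfl fun y₀ _ => Finset.sum_congr rfl fun x _ =>
    Finset.sum_congr rfl fun y _ => by ring

theorem CutRegular.fourCycleCount_le {E : Finset (α × β)} {η : ℝ} (h : CutRegular η E X Y) :
    fourCycleCount E X Y ≤ (bmDens E X Y ^ 4 + 2 * η) * (X.card * Y.card) ^ 2 := by
  have hη := h.mul_card_nonneg
  have hd₀ := bmDens_nonneg E X Y
  have hd₁ := bmDens_le_one E X Y
  have hfiber : ∀ x₀ ∈ X, ∀ y₀ ∈ Y, edgeInd E x₀ y₀ *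
      (∑ x ∈ X, ∑ y ∈ Y, edgeInd E x y * (edgeInd E x y₀ * edgeInd E x₀ y)) ≤
      bmDens E X Y * (edgeInd E x₀ y₀ *
        ((∑ x ∈ X, edgeInd E x y₀) * ∑ y ∈ Y, edgeInd E x₀ y)) + η * (X.card * Y.card) := by
    intro x₀ _ y₀ _
    have := (abs_le.1 (h.abs_sum_mul_sub_le (edgeInd_eq_zero_or_one E · y₀)
      (edgeInd_eq_zero_or_one E x₀))).2
    rcases edgeInd_eq_zero_or_one E x₀ y₀ with h₀ | h₀ <;> rw [h₀] <;> linarith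
  calc fourCycleCount E X Y
      ≤ ∑ x₀ ∈ X, ∑ y₀ ∈ Y, (bmDens E X Y * (edgeInd E x₀ y₀ *
        ((∑ x ∈ X, edgeInd E x y₀) * ∑ y ∈ Y, edgeInd E x₀ y)) + η * (X.card * Y.card)) :=
        (fourCycleCount_eq_sum E X Y).trans_le <|
          Finset.sum_le_sum fun x₀ hx₀ => Finset.sum_le_sum (hfiber x₀ hx₀)
    _ = bmDens E X Y * (∑ x₀ ∈ X, ∑ y₀ ∈ Y, edgeInd E x₀ y₀ *
        ((∑ x ∈ X, edgeInd E x y₀) * ∑ y ∈ Y, edgeInd E x₀ y)) +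
        η * (X.card * (Y.card * (X.card * Y.card))) := by
        simp only [Finset.sum_add_distrib, ← Finset.mul_sum, Finset.sum_const, nsmul_eq_mul]
    _ ≤ bmDens E X Y * ((bmDens E X Y ^ 3 + η) * (X.card * Y.card) ^ 2) +
        η * (X.card * (Y.card * (X.card * Y.card))) := by
        gcongr
        exact h.sum_degree_mul_degree_le
    _ = bmDens E X Y ^ 4 * (X.card * Y.card) ^ 2 +
        (bmDens E X Y + 1) * (η * (X.card * Y.card)) * (X.card * Y.card) := by ring
    _ ≤ bmDens E X Y ^ 4 * (X.card * Y.card) ^ 2 +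
        (1 + 1) * (η * (X.card * Y.card)) * (X.card * Y.card) := by gcongr
    _ = (bmDens E X Y ^ 4 + 2 * η) * (X.card * Y.card) ^ 2 := by ring

theorem SzReg.cherryCount_le {E : Finset (α × β)} (h : SzReg (bmDens E X Y ^ 27) E X Y) :
    cherryCount E X Y ≤ 2 * bmDens E X Y ^ 2 * (X.card * Y.card ^ 2) := by
  refine h.cutRegular_bmDens_pow_four.cherryCount_le.trans ?_
  gcongr
  have hpow : bmDens E X Y ^ 4 ≤ bmDens E X Y ^ 2 :=
    pow_le_pow_of_le_one (bmDens_nonneg E X Y) (bmDens_le_one E X Y) (by norm_num)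
  linarith [sq_nonneg (bmDens E X Y)]

theorem SzReg.fourCycleCount_le {E : Finset (α × β)} (h : SzReg (bmDens E X Y ^ 27) E X Y) :
    fourCycleCount E X Y ≤ 2 * bmDens E X Y ^ 4 * (X.card * Y.card) ^ 2 := by
  refine h.cutRegular_bmDens_pow_four.fourCycleCount_le.trans ?_
  gcongr
  linarith [pow_nonneg (bmDens_nonneg E X Y) 4]

variable {E₁ : Finset (α × γ)} {E₂ : Finset (β × γ)}

theorem CutRegular.le_sum_degree_mul_degree {η : ℝ} (h : CutRegular η E₁ X Z)
    (E₀ : Finset (α × β)) (Y : Finset β) :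
    (bmDens E₀ X Y * bmDens E₁ X Z - η) * (X.card * Y.card * Z.card) ≤
      ∑ x ∈ X, (∑ y ∈ Y, edgeInd E₀ x y) * ∑ z ∈ Z, edgeInd E₁ x z := by
  have hfiber : ∀ y ∈ Y, bmDens E₁ X Z * ((∑ x ∈ X, edgeInd E₀ x y) * Z.card) -
      η * (X.card * Z.card) ≤ ∑ x ∈ X, ∑ z ∈ Z, edgeInd E₁ x z * edgeInd E₀ x y := by
    intro y _
    have := h.abs_sum_mul_sub_le (u := (edgeInd E₀ · y)) (v := fun _ => 1)
      (edgeInd_eq_zero_or_one E₀ · y) fun _ => Or.inr rfl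
    simp only [mul_one, Finset.sum_const, nsmul_eq_mul] at this
    linarith [(abs_le.1 this).1]
  calc (bmDens E₀ X Y * bmDens E₁ X Z - η) * (X.card * Y.card * Z.card)
      = bmDens E₁ X Z * (bmEdges E₀ X Y * Z.card) - Y.card * (η * (X.card * Z.card)) := by
        rw [← bmDens_mul_card]
        ring
    _ = ∑ y ∈ Y, (bmDens E₁ X Z * ((∑ x ∈ X, edgeInd E₀ x y) * Z.card) -
          η * (X.card * Z.card)) := by
        rw [Finset.sum_sub_distrib, ← Finset.mul_sum, ← Finset.sum_mul, Finset.sum_comm,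
          sum_edgeInd, Finset.sum_const, nsmul_eq_mul]
    _ ≤ ∑ y ∈ Y, ∑ x ∈ X, ∑ z ∈ Z, edgeInd E₁ x z * edgeInd E₀ x y := Finset.sum_le_sum hfiber
    _ = ∑ x ∈ X, (∑ y ∈ Y, edgeInd E₀ x y) * ∑ z ∈ Z, edgeInd E₁ x z := by
        rw [Finset.sum_comm]
        simp only [Finset.sum_mul_sum, mul_comm (edgeInd E₁ _ _)]

theorem CutRegular.le_sum_edgeInd_triangle {η₁ η₂ : ℝ} (h₁ : CutRegular η₁ E₁ X Z)
    (h₂ : CutRegular η₂ E₂ Y Z) (E₀ : Finset (α × β)) :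
    (bmDens E₀ X Y * bmDens E₁ X Z * bmDens E₂ Y Z - bmDens E₂ Y Z * η₁ - η₂) *
        (X.card * Y.card * Z.card) ≤
      ∑ x ∈ X, ∑ y ∈ Y, ∑ z ∈ Z, edgeInd E₀ x y * edgeInd E₁ x z * edgeInd E₂ y z := by
  have hd := bmDens_nonneg E₂ Y Z
  have hfiber : ∀ x ∈ X, bmDens E₂ Y Z * ((∑ y ∈ Y, edgeInd E₀ x y) * ∑ z ∈ Z, edgeInd E₁ x z) -
      η₂ * (Y.card * Z.card) ≤
      ∑ y ∈ Y, ∑ z ∈ Z, edgeInd E₀ x y * edgeInd E₁ x z * edgeInd E₂ y z := by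
    intro x _
    simp only [mul_comm (_ * _) (edgeInd E₂ _ _)]
    linarith [(abs_le.1 (h₂.abs_sum_mul_sub_le (edgeInd_eq_zero_or_one E₀ x)
      (edgeInd_eq_zero_or_one E₁ x))).1]
  calc (bmDens E₀ X Y * bmDens E₁ X Z * bmDens E₂ Y Z - bmDens E₂ Y Z * η₁ - η₂) *
        (X.card * Y.card * Z.card)
      = bmDens E₂ Y Z * ((bmDens E₀ X Y * bmDens E₁ X Z - η₁) * (X.card * Y.card * Z.card)) -
          X.card * (η₂ * (Y.card * Z.card)) := by ring
    _ ≤ bmDens E₂ Y Z * (∑ x ∈ X, (∑ y ∈ Y, edgeInd E₀ x y) * ∑ z ∈ Z, edgeInd E₁ x z) -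
          X.card * (η₂ * (Y.card * Z.card)) := by
        gcongr
        exact h₁.le_sum_degree_mul_degree E₀ Y
    _ = ∑ x ∈ X, (bmDens E₂ Y Z * ((∑ y ∈ Y, edgeInd E₀ x y) * ∑ z ∈ Z, edgeInd E₁ x z) -
          η₂ * (Y.card * Z.card)) := by
        rw [Finset.sum_sub_distrib, ← Finset.mul_sum, Finset.sum_const, nsmul_eq_mul]
    _ ≤ _ := Finset.sum_le_sum hfiber

end Counting

section Triads

variable {α β γ : Type*} {X : Finset α} {Y : Finset β} {Z : Finset γ}

theorem sum_mul_edgeInd_pow_eight_le_octahedronSum (f : α → β → γ → ℝ) {E₀ F₀ : Finset (α × β)}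
    {E₁ F₁ : Finset (α × γ)} {E₂ F₂ : Finset (β × γ)} (h₀ : F₀ ⊆ E₀) (h₁ : F₁ ⊆ E₁)
    (h₂ : F₂ ⊆ E₂) :
    (∑ x ∈ X, ∑ y ∈ Y, ∑ z ∈ Z,
        f x y z * (edgeInd F₀ x y * edgeInd F₁ x z * edgeInd F₂ y z)) ^ 8 ≤
      bmEdges E₀ X Y ^ 4 * cherryCount E₁ X Z ^ 2 * fourCycleCount E₂ Y Z *
        octahedronSum f X Y Z := by
  refine (sum_mul_pow_eight_le_octahedronSum f X Y Z _ _ _).trans ?_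
  have hedges : (bmEdges F₀ X Y : ℝ) ≤ bmEdges E₀ X Y := by
    exact_mod_cast Finset.card_le_card (Finset.filter_subset_filter _ h₀)
  have hcherry := cherryCount_mono h₁ X Z
  have hcycle := fourCycleCount_mono h₂ Y Z
  have hcherry₀ := cherryCount_nonneg F₁ X Z
  have hcycle₀ := fourCycleCount_nonneg F₂ Y Z
  have hoct₀ := octahedronSum_nonneg f X Y Z
  simp only [mul_pow, sq_edgeInd, sum_edgeInd]
  change _ * cherryCount F₁ X Z ^ 2 * fourCycleCount F₂ Y Z * _ ≤ _
  gcongr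

variable [DecidableEq α] [DecidableEq β] [DecidableEq γ]

theorem mem_tri {e₀ : Finset (α × β)} {e₁ : Finset (α × γ)} {e₂ : Finset (β × γ)} {x : α} {y : β}
    {z : γ} : (x, y, z) ∈ tri e₀ e₁ e₂ ↔ (x, y) ∈ e₀ ∧ (x, z) ∈ e₁ ∧ (y, z) ∈ e₂ := by
  simp only [tri, Finset.mem_image, Finset.mem_filter, Finset.mem_product, Prod.exists,
    Prod.mk.injEq]
  aesop

theorem tri_subset_tri {e₀ f₀ : Finset (α × β)} {e₁ f₁ : Finset (α × γ)} {e₂ f₂ : Finset (β × γ)}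
    (h₀ : f₀ ⊆ e₀) (h₁ : f₁ ⊆ e₁) (h₂ : f₂ ⊆ e₂) : tri f₀ f₁ f₂ ⊆ tri e₀ e₁ e₂ :=
  fun ⟨_, _, _⟩ ht => mem_tri.2 ⟨h₀ (mem_tri.1 ht).1, h₁ (mem_tri.1 ht).2.1, h₂ (mem_tri.1 ht).2.2⟩

theorem sum_tri {e₀ : Finset (α × β)} {e₁ : Finset (α × γ)} (h₀ : e₀ ⊆ X ×ˢ Y)
    (h₁ : e₁ ⊆ X ×ˢ Z) (e₂ : Finset (β × γ)) (G : α → β → γ → ℝ) :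
    ∑ t ∈ tri e₀ e₁ e₂, G t.1 t.2.1 t.2.2 =
      ∑ x ∈ X, ∑ y ∈ Y, ∑ z ∈ Z,
        G x y z * (edgeInd e₀ x y * edgeInd e₁ x z * edgeInd e₂ y z) := by
  have hsub : tri e₀ e₁ e₂ ⊆ X ×ˢ Y ×ˢ Z := fun ⟨x, y, z⟩ ht => by
    obtain ⟨hxy, hxz, -⟩ := mem_tri.1 ht
    have hxy := Finset.mem_product.1 (h₀ hxy)
    exact Finset.mem_product.2 ⟨hxy.1, Finset.mem_product.2
      ⟨hxy.2, (Finset.mem_product.1 (h₁ hxz)).2⟩⟩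
  rw [← Finset.inter_eq_right.2 hsub, ← Finset.sum_ite_mem, Finset.sum_product]
  simp only [Finset.sum_product, mem_tri]
  refine Finset.sum_congr rfl fun x _ => Finset.sum_congr rfl fun y _ =>
    Finset.sum_congr rfl fun z _ => ?_
  simp only [edgeInd]
  split_ifs <;> simp_all

theorem card_tri_eq_sum_edgeInd {e₀ : Finset (α × β)} {e₁ : Finset (α × γ)} (h₀ : e₀ ⊆ X ×ˢ Y)
    (h₁ : e₁ ⊆ X ×ˢ Z) (e₂ : Finset (β × γ)) : ((tri e₀ e₁ e₂).card : ℝ) =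
    ∑ x ∈ X, ∑ y ∈ Y, ∑ z ∈ Z, edgeInd e₀ x y * edgeInd e₁ x z * edgeInd e₂ y z := by
  simpa using sum_tri h₀ h₁ e₂ fun _ _ _ => 1

theorem bmDens_mul_card_le_two_mul_card_tri {e₀ : Finset (α × β)} {e₁ : Finset (α × γ)}
    {e₂ : Finset (β × γ)} (h₀ : e₀ ⊆ X ×ˢ Y) (h₁ : e₁ ⊆ X ×ˢ Z)
    (hd₀₁ : bmDens e₀ X Y = bmDens e₁ X Z) (hd₁₂ : bmDens e₁ X Z = bmDens e₂ Y Z)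
    (hreg₁ : SzReg (bmDens e₁ X Z ^ 27) e₁ X Z) (hreg₂ : SzReg (bmDens e₂ Y Z ^ 27) e₂ Y Z) :
    bmDens e₀ X Y * bmDens e₁ X Z * bmDens e₂ Y Z * (X.card * Y.card * Z.card) ≤
      2 * (tri e₀ e₁ e₂).card := by
  have htri := hreg₁.cutRegular_bmDens_pow_four.le_sum_edgeInd_triangle
    hreg₂.cutRegular_bmDens_pow_four e₀
  rw [← card_tri_eq_sum_edgeInd h₀ h₁, hd₀₁, hd₁₂] at htri
  rw [hd₀₁, hd₁₂]
  set d := bmDens e₂ Y Z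
  have hd : 0 ≤ d := bmDens_nonneg e₂ Y Z
  have hd' : d ≤ 1 := bmDens_le_one e₂ Y Z
  have hmain : d * d * d ≤ 2 * (d * d * d - d * (d ^ 4 / 4) - d ^ 4 / 4) := by
    have h4 : d ^ 4 ≤ d ^ 3 := pow_le_pow_of_le_one hd hd' (by norm_num)
    have h5 : d ^ 5 ≤ d ^ 3 := pow_le_pow_of_le_one hd hd' (by norm_num)
    linarith
  calc d * d * d * (X.card * Y.card * Z.card)
      ≤ 2 * (d * d * d - d * (d ^ 4 / 4) - d ^ 4 / 4) * (X.card * Y.card * Z.card) := by gcongr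
    _ ≤ 2 * (tri e₀ e₁ e₂).card := by linarith

end Triads

section Regularity

variable {α : Type*} [DecidableEq α] {H : Finset (α × α × α)} {X Y Z : Finset α}
  {E₀ E₁ E₂ F₀ F₁ F₂ : Finset (α × α)}

theorem triDens_mul_card_tri (H : Finset (α × α × α)) (E₀ E₁ E₂ : Finset (α × α)) :
    triDens H E₀ E₁ E₂ * (tri E₀ E₁ E₂).card = (H ∩ tri E₀ E₁ E₂).card :=
  div_mul_cancel_of_imp fun h => by
    exact_mod_cast Nat.le_zero.1 <|
      (Finset.card_le_card Finset.inter_subset_right).trans_eq (Nat.cast_eq_zero.1 h)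

theorem sum_fQ_mul_edgeInd (hF₀ : F₀ ⊆ E₀) (hF₁ : F₁ ⊆ E₁) (hF₂ : F₂ ⊆ E₂) (hE₀ : E₀ ⊆ X ×ˢ Y)
    (hE₁ : E₁ ⊆ X ×ˢ Z) :
    ∑ x ∈ X, ∑ y ∈ Y, ∑ z ∈ Z, fQ H E₀ E₁ E₂ x y z *
        (edgeInd F₀ x y * edgeInd F₁ x z * edgeInd F₂ y z) =
      (triDens H F₀ F₁ F₂ - triDens H E₀ E₁ E₂) * (tri F₀ F₁ F₂).card := by
  have hfQ : ∀ t ∈ tri F₀ F₁ F₂, fQ H E₀ E₁ E₂ t.1 t.2.1 t.2.2 =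
      (if t ∈ H then 1 else 0) - triDens H E₀ E₁ E₂ := fun t ht => by
    rw [fQ, if_pos (tri_subset_tri hF₀ hF₁ hF₂ ht)]
    split_ifs <;> simp
  rw [← sum_tri (hF₀.trans hE₀) (hF₁.trans hE₁), Finset.sum_congr rfl hfQ, Finset.sum_sub_distrib,
    Finset.sum_const, nsmul_eq_mul, ← Finset.sum_filter, Finset.filter_mem_eq_inter, sub_mul,
    triDens_mul_card_tri, Finset.inter_comm, Finset.sum_const, nsmul_eq_mul, mul_one,
    mul_comm (triDens _ _ _ _)]

theorem triadReg_of_abs_sub_mul_card_le {ε : ℝ} (hε : 0 < ε)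
    (h : ∀ F₀ ⊆ E₀, ∀ F₁ ⊆ E₁, ∀ F₂ ⊆ E₂,
      |triDens H F₀ F₁ F₂ - triDens H E₀ E₁ E₂| * (tri F₀ F₁ F₂).card ≤
        ε ^ 2 * (tri E₀ E₁ E₂).card) :
    TriadReg ε H E₀ E₁ E₂ := by
  intro F₀ hF₀ F₁ hF₁ F₂ hF₂ hlarge
  rcases (Nat.cast_nonneg (α := ℝ) (tri F₀ F₁ F₂).card).eq_or_lt with hF | hF
  · have hE : ((tri E₀ E₁ E₂).card : ℝ) = 0 :=
      le_antisymm (nonpos_of_mul_nonpos_right (hlarge.trans_eq hF.symm) hε) (Nat.cast_nonneg _)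
    simp [triDens, ← hF, hE, hε.le]
  · refine le_of_mul_le_mul_right ?_ hF
    calc _ ≤ ε * (ε * (tri E₀ E₁ E₂).card) := by linarith [h F₀ hF₀ F₁ hF₁ F₂ hF₂]
      _ ≤ ε * (tri F₀ F₁ F₂).card := by gcongr

theorem triDens_sub_mul_card_pow_eight_le (hF₀ : F₀ ⊆ E₀) (hF₁ : F₁ ⊆ E₁) (hF₂ : F₂ ⊆ E₂)
    (hE₀ : E₀ ⊆ X ×ˢ Y) (hE₁ : E₁ ⊆ X ×ˢ Z) :
    ((triDens H F₀ F₁ F₂ - triDens H E₀ E₁ E₂) * (tri F₀ F₁ F₂).card) ^ 8 ≤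
      bmEdges E₀ X Y ^ 4 * cherryCount E₁ X Z ^ 2 * fourCycleCount E₂ Y Z *
        octSum H E₀ E₁ E₂ X Y Z := by
  rw [← sum_fQ_mul_edgeInd hF₀ hF₁ hF₂ hE₀ hE₁]
  exact sum_mul_edgeInd_pow_eight_le_octahedronSum _ hF₀ hF₁ hF₂

theorem triadReg_of_octSum_le {ε : ℝ} (hε₀ : 0 < ε) (hε : ε ≤ 1 / 2) (hE₀ : E₀ ⊆ X ×ˢ Y)
    (hE₁ : E₁ ⊆ X ×ˢ Z)
    (hcherry : cherryCount E₁ X Z ≤ 2 * bmDens E₁ X Z ^ 2 * (X.card * Z.card ^ 2))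
    (hcycle : fourCycleCount E₂ Y Z ≤ 2 * bmDens E₂ Y Z ^ 4 * (Y.card * Z.card) ^ 2)
    (htri : bmDens E₀ X Y * bmDens E₁ X Z * bmDens E₂ Y Z * (X.card * Y.card * Z.card) ≤
      2 * (tri E₀ E₁ E₂).card)
    (hoct : octSum H E₀ E₁ E₂ X Y Z ≤ ε ^ 27 *
      (bmDens E₀ X Y * bmDens E₁ X Z * bmDens E₂ Y Z) ^ 4 * (X.card * Y.card * Z.card) ^ 2) :
    TriadReg ε H E₀ E₁ E₂ := by
  refine triadReg_of_abs_sub_mul_card_le hε₀ fun F₀ hF₀ F₁ hF₁ F₂ hF₂ => ?_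
  have hd₀ := bmDens_nonneg E₀ X Y
  have hd₁ := bmDens_nonneg E₁ X Z
  have hd₂ := bmDens_nonneg E₂ Y Z
  have hcherry₀ := cherryCount_nonneg E₁ X Z
  have hcycle₀ := fourCycleCount_nonneg E₂ Y Z
  have hoct₀ : 0 ≤ octSum H E₀ E₁ E₂ X Y Z := octahedronSum_nonneg _ X Y Z
  rw [← Nat.abs_cast (tri F₀ F₁ F₂).card, ← abs_mul]
  refine le_of_pow_le_pow_left₀ (n := 8) (by norm_num) (by positivity) ?_
  rw [Even.pow_abs (by decide)]
  calc ((triDens H F₀ F₁ F₂ - triDens H E₀ E₁ E₂) * (tri F₀ F₁ F₂).card) ^ 8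
      ≤ bmEdges E₀ X Y ^ 4 * cherryCount E₁ X Z ^ 2 * fourCycleCount E₂ Y Z *
        octSum H E₀ E₁ E₂ X Y Z := triDens_sub_mul_card_pow_eight_le hF₀ hF₁ hF₂ hE₀ hE₁
    _ ≤ (bmDens E₀ X Y * (X.card * Y.card)) ^ 4 *
        (2 * bmDens E₁ X Z ^ 2 * (X.card * Z.card ^ 2)) ^ 2 *
        (2 * bmDens E₂ Y Z ^ 4 * (Y.card * Z.card) ^ 2) *
        (ε ^ 27 * (bmDens E₀ X Y * bmDens E₁ X Z * bmDens E₂ Y Z) ^ 4 *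
          (X.card * Y.card * Z.card) ^ 2) := by
        rw [bmDens_mul_card]
        gcongr
    _ = 8 * ε ^ 16 * ε ^ 11 * (bmDens E₀ X Y * bmDens E₁ X Z * bmDens E₂ Y Z *
        (X.card * Y.card * Z.card)) ^ 8 := by ring
    _ ≤ 8 * ε ^ 16 * (1 / 2) ^ 11 * (2 * (tri E₀ E₁ E₂).card) ^ 8 := by gcongr
    _ = (ε ^ 2 * (tri E₀ E₁ E₂).card) ^ 8 := by ring

end Regularity

theorem quasirandom_implies_triad_regular_general {α : Type*} [DecidableEq α]
    {H : Finset (α × α × α)} {X Y Z : Finset α} {E₀ E₁ E₂ : Finset (α × α)}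
    (hXY : X.card = Y.card) (hYZ : Y.card = Z.card) (hE₀ : E₀ ⊆ X ×ˢ Y) (hE₁ : E₁ ⊆ X ×ˢ Z)
    (hd₀₁ : bmDens E₀ X Y = bmDens E₁ X Z) (hd₁₂ : bmDens E₁ X Z = bmDens E₂ Y Z)
    {ε : ℝ} (hε₀ : 0 < ε) (hε : ε ≤ 1 / 2) (hquasi : Quasirandom (ε ^ 27) H E₀ E₁ E₂ X Y Z)
    (hreg₁ : SzReg (bmDens E₁ X Z ^ 27) E₁ X Z) (hreg₂ : SzReg (bmDens E₂ Y Z ^ 27) E₂ Y Z) :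
    TriadReg ε H E₀ E₁ E₂ := by
  have htri := bmDens_mul_card_le_two_mul_card_tri hE₀ hE₁ hd₀₁ hd₁₂ hreg₁ hreg₂
  refine triadReg_of_octSum_le hε₀ hε hE₀ hE₁ hreg₁.cherryCount_le hreg₂.fourCycleCount_le htri ?_
  refine (hquasi _ _ hd₀₁ rfl hd₁₂.symm hXY rfl hYZ.symm).trans_eq ?_
  rw [hd₀₁, ← hd₁₂, hXY, ← hYZ]
  ring

/-- **Proposition 4.7.** Quasirandomness implies triad regularity. -/
theorem quasirandom_implies_triad_regular :
    ∃ C : ℝ, 1 ≤ C ∧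
      ∀ (α : Type) [inst : DecidableEq α] (H : Finset (α × α × α))
        (X Y Z : Finset α) (E0 E1 E2 : Finset (α × α)),
        Disjoint X Y → Disjoint X Z → Disjoint Y Z →
        X.card = Y.card → Y.card = Z.card →
        E0 ⊆ X ×ˢ Y → E1 ⊆ X ×ˢ Z → E2 ⊆ Y ×ˢ Z →
        bmDens E0 X Y = bmDens E1 X Z → bmDens E1 X Z = bmDens E2 Y Z →
        ∀ ε : ℝ, 0 < ε → ε ≤ 1 / 2 →
          Quasirandom (ε ^ C) H E0 E1 E2 X Y Z →
          SzReg (bmDens E0 X Y ^ C) E0 X Y →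
          SzReg (bmDens E1 X Z ^ C) E1 X Z →
          SzReg (bmDens E2 Y Z ^ C) E2 Y Z →
          TriadReg ε H E0 E1 E2 := by
  refine ⟨27, by norm_num, fun _ _ _ _ _ _ _ _ _ _ _ _ hXY hYZ hE0 hE1 _ hd01 hd12 ε hε₀ hε => ?_⟩
  simpa only [Real.rpow_ofNat] using fun hquasi _ =>
    quasirandom_implies_triad_regular_general hXY hYZ hE0 hE1 hd01 hd12 hε₀ hε hquasi
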